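/- There exists a (14,6)-puzzle that is a strong uniquely solvable puzzle. -/

import Mathlib

/-- Exactly two of the three propositions hold. -/
def ExactlyTwo (A B C : Prop) : Prop :=
  (A ∧ B ∧ ¬C) ∨ (A ∧ ¬B ∧ C) ∨ (¬A ∧ B ∧ C)

/-- At least two of the three propositions hold. -/
def AtLeastTwo (A B C : Prop) : Prop :=
  (A ∧ B) ∨ (A ∧ C) ∨ (B ∧ C)

/-- A puzzle of width `k` is a finite set of rows in `{1,2,3}^k`; we use the
alphabet `Fin 3` whose three elements are denoted `1`, `2`, `3` (`3 = 0`).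
`P` is a strong uniquely solvable puzzle (strong USP). -/
def IsSUSP {k : ℕ} (P : Finset (Fin k → Fin 3)) : Prop :=
  ∀ π₁ π₂ π₃ : Equiv.Perm {r // r ∈ P},
    (π₁ = π₂ ∧ π₂ = π₃) ∨
    ∃ (r : {r // r ∈ P}) (c : Fin k),
      ExactlyTwo ((π₁ r).1 c = 1) ((π₂ r).1 c = 2) ((π₃ r).1 c = 3)

instance ExactlyTwo.instDecidable (A B C : Prop) [Decidable A] [Decidable B] [Decidable C] :
    Decidable (ExactlyTwo A B C) :=
  inferInstanceAs (Decidable ((A ∧ B ∧ ¬C) ∨ (A ∧ ¬B ∧ C) ∨ (¬A ∧ B ∧ C)))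

/-- A puzzle is a strong USP if there are row weights `a`, `b` such that every triple of rows,
not all equal, in which no column has exactly two matches satisfies `a r + b r < a p + b q`. -/
theorem isSUSP_of_weights {k : ℕ} {P : Finset (Fin k → Fin 3)} (a b : {r // r ∈ P} → ℤ)
    (h : ∀ p q r : {r // r ∈ P}, (p = q ∧ q = r) ∨ a r + b r < a p + b q ∨
      ∃ c, ExactlyTwo (p.1 c = 1) (q.1 c = 2) (r.1 c = 3)) :
    IsSUSP P := by
  intro π₁ π₂ π₃
  refine or_iff_not_imp_right.2 fun hne => ?_
  push Not at hne
  have hcase (r) : (π₁ r = π₂ r ∧ π₂ r = π₃ r) ∨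
      a (π₃ r) + b (π₃ r) < a (π₁ r) + b (π₂ r) := by
    rcases h (π₁ r) (π₂ r) (π₃ r) with h | h | ⟨c, hc⟩
    · exact .inl h
    · exact .inr h
    · exact absurd hc (hne r c)
  have hle (r) : a (π₃ r) + b (π₃ r) ≤ a (π₁ r) + b (π₂ r) := by
    rcases hcase r with ⟨h₁, h₂⟩ | h
    · rw [h₁, h₂]
    · exact h.le
  have hsum : ∑ r, (a (π₃ r) + b (π₃ r)) = ∑ r, (a (π₁ r) + b (π₂ r)) := by
    simp only [Finset.sum_add_distrib, Equiv.sum_comp]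
  have heq := (Finset.sum_eq_sum_iff_of_le fun r _ => hle r).1 hsum
  have hdiag (r) : π₁ r = π₂ r ∧ π₂ r = π₃ r :=
    (hcase r).resolve_right (heq r (Finset.mem_univ r)).not_lt
  exact ⟨Equiv.ext fun r => (hdiag r).1, Equiv.ext fun r => (hdiag r).2⟩

/-- A version of `isSUSP_of_weights` for a puzzle given by an indexed family of rows. -/
theorem isSUSP_map_of_weights {n k : ℕ} (row : Fin n ↪ (Fin k → Fin 3)) (a b : Fin n → ℤ)
    (h : ∀ p q r, (p = q ∧ q = r) ∨ a r + b r < a p + b q ∨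
      ∃ c, ExactlyTwo (row p c = 1) (row q c = 2) (row r c = 3)) :
    IsSUSP (Finset.univ.map row) := by
  have hrow (x : {r // r ∈ Finset.univ.map row}) : ∃ i, row i = x.1 := by
    obtain ⟨i, -, hi⟩ := Finset.mem_map.1 x.2
    exact ⟨i, hi⟩
  choose idx hidx using hrow
  refine isSUSP_of_weights (a ∘ idx) (b ∘ idx) fun p q r => ?_
  simp only [Function.comp_apply, ← hidx, Subtype.ext_iff, row.injective.eq_iff]
  exact h _ _ _

/-- The rows of a `(14, 6)`-puzzle. -/
def fourteenRow : Fin 14 → Fin 6 → Fin 3 :=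
  ![![2, 3, 1, 1, 1, 2], ![2, 1, 1, 2, 3, 2], ![3, 2, 3, 1, 3, 2], ![3, 2, 1, 2, 1, 2],
    ![3, 3, 3, 2, 3, 2], ![2, 2, 3, 1, 2, 1], ![2, 1, 1, 1, 2, 3], ![3, 1, 1, 1, 1, 3],
    ![2, 3, 3, 2, 3, 1], ![3, 3, 1, 2, 2, 2], ![3, 3, 3, 1, 1, 2], ![3, 2, 1, 1, 3, 3],
    ![3, 1, 3, 2, 1, 1], ![2, 1, 3, 1, 3, 1]]

/-- First weight certifying that `fourteenRow` is a strong USP. -/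
def weightOne : Fin 14 → ℤ :=
  ![-73, 0, 23, -3, 103, 0, -68, -79, 61, 1, 16, -64, 48, -2]

/-- Second weight certifying that `fourteenRow` is a strong USP. -/
def weightTwo : Fin 14 → ℤ :=
  ![-16, -85, 0, -79, -76, -8, -5, 35, -55, -81, 5, 30, -33, 7]

theorem fourteenRow_injective : Function.Injective fourteenRow := by
  decide +kernel

theorem fourteenRow_weights (p q r : Fin 14) :
    (p = q ∧ q = r) ∨
      weightOne r + weightTwo r < weightOne p + weightTwo q ∨
      ∃ c, ExactlyTwo (fourteenRow p c = 1) (fourteenRow q c = 2) (fourteenRow r c = 3) := by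
  revert p q r
  decide +kernel

/-- There is a `(14, 6)`-puzzle that is a strong uniquely solvable puzzle. -/
theorem exists_susp_14_6 :
    ∃ P : Finset (Fin 6 → Fin 3), P.card = 14 ∧ IsSUSP P := by
  exact ⟨Finset.univ.map ⟨fourteenRow, fourteenRow_injective⟩, by simp,
    isSUSP_map_of_weights _ weightOne weightTwo fourteenRow_weights⟩
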